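/- An ω-word ξ ∈ X^ω belongs to some regular ω-language of first Baire category if and only if ξ is not disjunctive; equivalently, the union R₀ of all regular ω-languages of first Baire category equals ⋃_{w ∈ X*} (X^ω \ X*·w·X^ω). -/

import Mathlib

open Set MeasureTheory Computability

namespace AutoBaire

/-- The Cantor topology on the space of ω-words over `X`:
the product of the discrete topology on `X`. -/
def cantorTop (X : Type) : TopologicalSpace (ℕ → X) :=
  @Pi.topologicalSpace ℕ (fun _ => X) (fun _ => ⊥)

/-- The Borel σ-algebra of the Cantor space. -/
def cantorBorel (X : Type) : MeasurableSpace (ℕ → X) :=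
  @borel (ℕ → X) (cantorTop X)

variable {X : Type}

/-- Concatenation `w·ξ` of a finite word with an ω-word. -/
def wcat (w : List X) (ξ : ℕ → X) : ℕ → X :=
  Stream'.appendStream' w ξ

/-- The ball (cylinder) `w·X^ω`. -/
def cyl (w : List X) : Set (ℕ → X) := {ξ | ∃ η : ℕ → X, ξ = wcat w η}

/-- The ω-language `W·A` for a language `W` and an ω-language `A`. -/
def catOmega (W : Language X) (A : Set (ℕ → X)) : Set (ℕ → X) :=
  {ξ | ∃ w ∈ W, ∃ η ∈ A, ξ = wcat w η}

/-- `V^ω`: the set of ω-words that are infinite concatenations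
`v₁·v₂·⋯` of non-empty words `vᵢ ∈ V`. -/
def omegaPow (V : Language X) : Set (ℕ → X) :=
  {ξ | ∃ f : ℕ → List X, (∀ i, f i ∈ V ∧ f i ≠ []) ∧
    ∀ k, ξ ∈ cyl (((List.range k).map f).flatten)}

/-- Regular languages: those obtained from finite languages via the operations
union, concatenation and star. -/
inductive IsRegLang : Language X → Prop
  | finite (W : Language X) : (W : Set (List X)).Finite → IsRegLang W
  | union (W V : Language X) : IsRegLang W → IsRegLang V → IsRegLang (W + V)
  | concat (W V : Language X) : IsRegLang W → IsRegLang V → IsRegLang (W * V)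
  | star (W : Language X) : IsRegLang W → IsRegLang (W∗)

/-- Regular ω-languages: finite unions `⋃ᵢ Wᵢ·Vᵢ^ω` with `Wᵢ, Vᵢ` regular. -/
def IsRegOmega (F : Set (ℕ → X)) : Prop :=
  ∃ (n : ℕ) (W V : Fin n → Language X),
    (∀ i, IsRegLang (W i) ∧ IsRegLang (V i)) ∧
    F = ⋃ i, catOmega (W i) (omegaPow (V i))

/-- `X*·w·X^ω`: the set of ω-words containing `w` as an infix. -/
def infixOcc (w : List X) : Set (ℕ → X) :=
  {ξ | ∃ u : List X, ξ ∈ cyl (u ++ w)}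

/-- An ω-word is disjunctive if every finite word occurs in it as an infix. -/
def Disjunctive (ξ : ℕ → X) : Prop := ∀ w : List X, ξ ∈ infixOcc w

/-- Ultimately periodic ω-words: `ξ = w·v·v·v·⋯` with `v ≠ e`. -/
def UltPeriodic (ξ : ℕ → X) : Prop :=
  ∃ (w v : List X) (h : v ≠ []), ξ = wcat w (Stream'.cycle v h)

/-- The Automatic Baire property: `F Δ E ⊆ F'` for some regular open
ω-language `E` and some regular ω-language `F'` of first Baire category. -/
def HasABP (F : Set (ℕ → X)) : Prop :=
  ∃ E F' : Set (ℕ → X),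
    IsRegOmega E ∧ @IsOpen _ (cantorTop X) E ∧
    IsRegOmega F' ∧ @IsMeagre _ (cantorTop X) F' ∧
    symmDiff F E ⊆ F'

/-- The measure is finite and non-null: `0 < μ(X^ω) < ∞`. -/
def FiniteNonNull (μ : @MeasureTheory.Measure (ℕ → X) (cantorBorel X)) : Prop :=
  0 < μ Set.univ ∧ μ Set.univ < ⊤

/-- `supp(μ) = X^ω`: every non-empty open set has positive measure. -/
def FullSupport (μ : @MeasureTheory.Measure (ℕ → X) (cantorBorel X)) : Prop :=
  ∀ U : Set (ℕ → X), @IsOpen _ (cantorTop X) U → U.Nonempty → 0 < μ U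

/-- The balance condition: there is `c > 0` such that for all `w ∈ X*`, `x ∈ X`
either `μ(wx·X^ω) = 0` or `c·μ(w·X^ω) ≤ μ(wx·X^ω)`. -/
def Balanced (μ : @MeasureTheory.Measure (ℕ → X) (cantorBorel X)) : Prop :=
  ∃ c : ENNReal, 0 < c ∧ ∀ (w : List X) (x : X),
    μ (cyl (w ++ [x])) = 0 ∨ c * μ (cyl w) ≤ μ (cyl (w ++ [x]))

/-! If `V^ω` is meagre then it is nowhere dense: it is the continuous image of the Baire space of
sequences of nonempty words of `V`, so some open set of sequences has nowhere dense image, and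
prefixing a suitable finite product of words of `V` maps `V^ω` into that image. If moreover `V` is
regular, then `V^ω` has only finitely many left quotients `{ξ | p·ξ ∈ V^ω}`. Their union is still
nowhere dense, so it misses a cylinder `z·X^ω`, and this one word `z` occurs nowhere in a word of
`V^ω`.

Conversely, cutting a word without the infix `w` into blocks of length `|w|` puts it in `V^ω`,
where `V` is the finite language of all words of length `|w|` other than `w`; and this `V^ω` is
nowhere dense. -/

section GeneralTopology

variable {α β : Type*} [TopologicalSpace α] [TopologicalSpace β]

theorem isNowhereDense_preimage_of_isOpenMap {f : α → β} (hc : Continuous f) (ho : IsOpenMap f)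
    {s : Set β} (hs : IsNowhereDense s) : IsNowhereDense (f ⁻¹' s) := by
  rw [IsNowhereDense, ← ho.preimage_closure_eq_closure_preimage hc,
    ← ho.preimage_interior_eq_interior_preimage hc, hs, preimage_empty]

theorem isNowhereDense_union {s t : Set α} (hs : IsNowhereDense s) (ht : IsNowhereDense t) :
    IsNowhereDense (s ∪ t) := by
  rw [IsNowhereDense, closure_union,
    interior_union_isClosed_of_interior_empty isClosed_closure ht, hs]

theorem isNowhereDense_sUnion {S : Set (Set α)} (hS : S.Finite)
    (h : ∀ s ∈ S, IsNowhereDense s) : IsNowhereDense (⋃₀ S) := by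
  induction S, hS using Set.Finite.induction_on with
  | empty => rw [sUnion_empty]; exact isNowhereDense_empty
  | insert _ _ ih =>
    rw [sUnion_insert]
    exact isNowhereDense_union (h _ (mem_insert _ _)) (ih fun s hs => h s (mem_insert_of_mem _ hs))

theorem exists_isOpen_isNowhereDense_image_of_isMeagre_range [BaireSpace α] [Nonempty α]
    {f : α → β} (hf : Continuous f) (hm : IsMeagre (range f)) :
    ∃ U : Set α, IsOpen U ∧ U.Nonempty ∧ IsNowhereDense (f '' U) := by
  obtain ⟨S, hS, hScount, hcover⟩ := isMeagre_iff_countable_union_isNowhereDense.mp hm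
  have : Countable S := hScount
  obtain ⟨⟨E, hE⟩, hint⟩ := nonempty_interior_of_iUnion_of_closed
    (f := fun E : S => f ⁻¹' closure (E : Set β))
    (fun E => isClosed_closure.preimage hf) <| by
      refine eq_univ_of_forall fun x => ?_
      obtain ⟨E, hE, hx⟩ := hcover (mem_range_self x)
      exact mem_iUnion.mpr ⟨⟨E, hE⟩, subset_closure hx⟩
  exact ⟨_, isOpen_interior, hint,
    (hS E hE).closure.mono (image_subset_iff.mpr interior_subset)⟩

end GeneralTopology

section LeftQuotients

variable {α : Type*}

theorem leftQuotient_mul (L M : Language α) (w : List α) :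
    (L * M).leftQuotient w =
      L.leftQuotient w * M + sSup (M.leftQuotient '' {v | ∃ u ∈ L, u ++ v = w}) := by
  ext y
  simp only [sSup_image, Language.mem_add, Language.mem_iSup, Language.mem_leftQuotient,
    Language.mem_mul, mem_ofPred_eq]
  constructor
  · rintro ⟨a, ha, b, hb, h⟩
    obtain ⟨c, rfl, rfl⟩ | ⟨c, rfl, rfl⟩ := List.append_eq_append_iff.mp h
    · exact Or.inr ⟨c, ⟨a, ha, rfl⟩, hb⟩
    · exact Or.inl ⟨c, ha, b, hb, rfl⟩
  · rintro (⟨a, ha, b, hb, rfl⟩ | ⟨v, ⟨u, hu, rfl⟩, hv⟩)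
    · exact ⟨w ++ a, ha, b, hb, List.append_assoc ..⟩
    · exact ⟨u, hu, v ++ y, hv, (List.append_assoc ..).symm⟩

theorem append_mem_kstar {L : Language α} {u v : List α} (hu : u ∈ L∗) (hv : v ∈ L∗) :
    u ++ v ∈ L∗ := by
  rw [← kstar_mul_kstar L]
  exact Language.append_mem_mul hu hv

open Classical in
theorem leftQuotient_kstar (L : Language α) (w : List α) :
    (L∗).leftQuotient w =
      (if w ∈ L∗ then L∗ else 0) +
        sSup (L.leftQuotient '' {v | ∃ u ∈ L∗, u ++ v = w}) * L∗ := by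
  ext y
  have h_ite : y ∈ (if w ∈ L∗ then L∗ else 0) ↔ w ∈ L∗ ∧ y ∈ L∗ := by
    split_ifs with hw <;> simp [hw]
  simp only [sSup_image, Language.mem_add, h_ite, Language.mem_iSup, Language.mem_leftQuotient,
    Language.mem_mul, mem_ofPred_eq]
  constructor
  · intro h
    obtain ⟨l, hl, hmem⟩ := Language.mem_kstar.mp h
    obtain ⟨as, bs, rfl, rfl, rfl⟩ | ⟨as, b, c, cs, ds, rfl, rfl, rfl⟩ :=
      List.flatten_eq_append_iff.mp hl.symm
    · exact Or.inl ⟨Language.join_mem_kstar fun v hv => hmem v (List.mem_append_left _ hv),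
        Language.join_mem_kstar fun v hv => hmem v (List.mem_append_right _ hv)⟩
    · exact Or.inr ⟨c :: cs,
        ⟨b, ⟨as.flatten, Language.join_mem_kstar fun v hv => hmem v (by simp [hv]), rfl⟩,
          hmem _ (by simp)⟩,
        ds.flatten, Language.join_mem_kstar fun v hv => hmem v (by simp [hv]), rfl⟩
  · rintro (⟨hw, hy⟩ | ⟨a, ⟨v, ⟨u, hu, rfl⟩, hv⟩, b, hb, rfl⟩)
    · exact append_mem_kstar hw hy
    · have hva : v ++ a ∈ L∗ := le_kstar (a := L) hv
      simpa only [List.append_assoc] using append_mem_kstar (append_mem_kstar hu hva) hb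

theorem isRegular_of_finite {L : Language α} (hL : (L : Set (List α)).Finite) : L.IsRegular := by
  have hsuffix : (⋃ x ∈ (L : Set (List α)), {y | y <:+ x}).Finite :=
    hL.biUnion fun x _ => x.tails.finite_toSet.subset fun y hy => (List.mem_tails y x).mpr hy
  refine .of_finite_range_leftQuotient (hsuffix.finite_subsets.subset ?_)
  rintro _ ⟨w, rfl⟩ y hy
  exact mem_biUnion hy (List.suffix_append w y)

theorem isRegular_mul {L M : Language α} (hL : L.IsRegular) (hM : M.IsRegular) :
    (L * M).IsRegular := by
  refine .of_finite_range_leftQuotient <| (hL.finite_range_leftQuotient.image2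
    (fun K S => K * M + sSup S) hM.finite_range_leftQuotient.finite_subsets).subset ?_
  rintro _ ⟨w, rfl⟩
  rw [leftQuotient_mul]
  exact mem_image2_of_mem (mem_range_self w) (image_subset_range _ _)

theorem isRegular_kstar {L : Language α} (hL : L.IsRegular) : (L∗).IsRegular := by
  classical
  refine .of_finite_range_leftQuotient <| ((toFinite {L∗, 0}).image2
    (fun K S => K + sSup S * L∗) hL.finite_range_leftQuotient.finite_subsets).subset ?_
  rintro _ ⟨w, rfl⟩
  rw [leftQuotient_kstar]
  refine mem_image2_of_mem ?_ (image_subset_range _ _)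
  split_ifs <;> simp

theorem IsRegLang.isRegular {W : Language X} (hW : IsRegLang W) : W.IsRegular := by
  induction hW with
  | finite W hW => exact isRegular_of_finite hW
  | union W V _ _ hW hV => exact hW.add hV
  | concat W V _ _ hW hV => exact isRegular_mul hW hV
  | star W _ hW => exact isRegular_kstar hW

end LeftQuotients

section Cylinders

/-- The initial segment `ξ(0) ⋯ ξ(n - 1)` of an ω-word, in the form in which finite products of a
sequence of words occur in `omegaPow`. -/
def initSeg (ξ : ℕ → X) (n : ℕ) : List X :=
  (List.range n).map ξ

@[simp]
theorem length_initSeg (ξ : ℕ → X) (n : ℕ) : (initSeg ξ n).length = n := by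
  simp only [initSeg, List.length_map, List.length_range]

@[simp]
theorem getElem_initSeg (ξ : ℕ → X) (n i : ℕ) (hi : i < (initSeg ξ n).length) :
    (initSeg ξ n)[i] = ξ i := by
  simp only [initSeg, List.getElem_map, List.getElem_range]

theorem initSeg_add (ξ : ℕ → X) (m n : ℕ) :
    initSeg ξ (m + n) = initSeg ξ m ++ initSeg (fun i => ξ (m + i)) n := by
  simp only [initSeg, List.range_add, List.map_append, List.map_map, Function.comp_def]

theorem initSeg_prefix (ξ : ℕ → X) {m n : ℕ} (h : m ≤ n) : initSeg ξ m <+: initSeg ξ n := by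
  obtain ⟨k, rfl⟩ := Nat.exists_eq_add_of_le h
  exact initSeg_add ξ m k ▸ List.prefix_append _ _

theorem wcat_append (w v : List X) (ξ : ℕ → X) : wcat (w ++ v) ξ = wcat w (wcat v ξ) :=
  Stream'.append_append_stream w v ξ

theorem wcat_injective (w : List X) : Function.Injective (wcat w) :=
  fun _ _ => Stream'.append_right_injective _ _ _

theorem wcat_apply_of_lt {w : List X} {i : ℕ} (hi : i < w.length) (ξ : ℕ → X) :
    wcat w ξ i = w[i] :=
  Stream'.get_append_left i w ξ hi

theorem wcat_apply_length_add (w : List X) (ξ : ℕ → X) (i : ℕ) :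
    wcat w ξ (w.length + i) = ξ i :=
  Stream'.get_append_right i w ξ

theorem initSeg_wcat (w : List X) (ξ : ℕ → X) (n : ℕ) :
    initSeg (wcat w ξ) (w.length + n) = w ++ initSeg ξ n := by
  have hw : initSeg (wcat w ξ) w.length = w :=
    List.ext_getElem (length_initSeg _ _) fun i _ hi => by
      rw [getElem_initSeg, wcat_apply_of_lt hi]
  simp only [initSeg_add, hw, wcat_apply_length_add]

theorem wcat_initSeg (ξ : ℕ → X) (n : ℕ) : wcat (initSeg ξ n) (fun i => ξ (n + i)) = ξ := by
  ext i
  obtain hi | ⟨j, rfl⟩ := (lt_or_ge i n).imp_right Nat.exists_eq_add_of_le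
  · rw [wcat_apply_of_lt (by rwa [length_initSeg]), getElem_initSeg]
  · simpa only [length_initSeg] using
      wcat_apply_length_add (initSeg ξ n) (fun i => ξ (n + i)) j

theorem wcat_mem_cyl (w : List X) (ξ : ℕ → X) : wcat w ξ ∈ cyl w :=
  ⟨ξ, rfl⟩

theorem mem_cyl_initSeg (ξ : ℕ → X) (n : ℕ) : ξ ∈ cyl (initSeg ξ n) :=
  ⟨_, (wcat_initSeg ξ n).symm⟩

theorem mem_cyl_iff_initSeg_eq {w : List X} {ξ : ℕ → X} :
    ξ ∈ cyl w ↔ initSeg ξ w.length = w := by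
  constructor
  · rintro ⟨η, rfl⟩
    exact (initSeg_wcat w η 0).trans (List.append_nil w)
  · intro h
    exact h ▸ mem_cyl_initSeg ξ w.length

theorem cyl_anti {w v : List X} (h : w <+: v) : cyl v ⊆ cyl w := by
  obtain ⟨u, rfl⟩ := h
  rintro _ ⟨η, rfl⟩
  rw [wcat_append]
  exact wcat_mem_cyl w _

theorem prefix_of_mem_cyl {w v : List X} {ξ : ℕ → X} (hw : ξ ∈ cyl w) (hv : ξ ∈ cyl v)
    (h : w.length ≤ v.length) : w <+: v := by
  rw [← mem_cyl_iff_initSeg_eq.mp hw, ← mem_cyl_iff_initSeg_eq.mp hv]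
  exact initSeg_prefix ξ h

theorem eq_of_mem_cyl {w v : List X} {ξ : ℕ → X} (hw : ξ ∈ cyl w) (hv : ξ ∈ cyl v)
    (h : w.length = v.length) : w = v :=
  (prefix_of_mem_cyl hw hv h.le).eq_of_length h

theorem image_wcat_cyl (w v : List X) : wcat w '' cyl v = cyl (w ++ v) := by
  ext ξ
  constructor
  · rintro ⟨_, ⟨η, rfl⟩, rfl⟩
    exact ⟨η, (wcat_append w v η).symm⟩
  · rintro ⟨η, rfl⟩
    exact ⟨wcat v η, wcat_mem_cyl v η, (wcat_append w v η).symm⟩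

theorem wcat_mem_cyl_append {w v : List X} {ξ : ℕ → X} :
    wcat w ξ ∈ cyl (w ++ v) ↔ ξ ∈ cyl v := by
  rw [← image_wcat_cyl, (wcat_injective w).mem_set_image]

theorem eq_of_forall_mem_cyl {w : ℕ → List X} (hw : ∀ n, n ≤ (w n).length) {ξ η : ℕ → X}
    (hξ : ∀ n, ξ ∈ cyl (w n)) (hη : ∀ n, η ∈ cyl (w n)) : ξ = η := by
  ext n
  obtain ⟨ξ', rfl⟩ := hξ (n + 1)
  obtain ⟨η', rfl⟩ := hη (n + 1)
  rw [wcat_apply_of_lt (hw (n + 1)), wcat_apply_of_lt (hw (n + 1))]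

theorem cyl_initSeg_eq_cylinder (ξ : ℕ → X) (n : ℕ) : cyl (initSeg ξ n) = PiNat.cylinder ξ n := by
  ext η
  rw [mem_cyl_iff_initSeg_eq, PiNat.mem_cylinder_iff, length_initSeg]
  simp only [initSeg, List.map_inj_left, List.mem_range]

end Cylinders

section CantorTopology

variable [TopologicalSpace X]

theorem continuous_wcat (w : List X) : Continuous (wcat w) := by
  induction w with
  | nil => exact continuous_id
  | cons a w ih =>
    exact continuous_pi fun
      | 0 => continuous_const
      | n + 1 => (continuous_apply n).comp ih

variable [DiscreteTopology X]

theorem isOpen_cyl (w : List X) : IsOpen (cyl w) := by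
  refine isOpen_iff_forall_mem_open.mpr fun ξ hξ => ⟨cyl w, subset_rfl, ?_, hξ⟩
  rw [← mem_cyl_iff_initSeg_eq.mp hξ, cyl_initSeg_eq_cylinder]
  exact PiNat.isOpen_cylinder _ ξ w.length

theorem isTopologicalBasis_range_cyl :
    TopologicalSpace.IsTopologicalBasis (range (cyl : List X → Set (ℕ → X))) := by
  refine TopologicalSpace.isTopologicalBasis_of_isOpen_of_nhds ?_ fun ξ U hξ hU => ?_
  · rintro _ ⟨w, rfl⟩
    exact isOpen_cyl w
  · obtain ⟨_, ⟨η, n, rfl⟩, hη, hsub⟩ :=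
      (PiNat.isTopologicalBasis_cylinders fun _ => X).exists_subset_of_mem_open hξ hU
    exact ⟨_, ⟨initSeg η n, cyl_initSeg_eq_cylinder η n⟩, hη, hsub⟩

theorem exists_cyl_subset {U : Set (ℕ → X)} (hU : IsOpen U) (hne : U.Nonempty) :
    ∃ w, cyl w ⊆ U := by
  obtain ⟨ξ, hξ⟩ := hne
  obtain ⟨_, ⟨w, rfl⟩, -, hw⟩ := isTopologicalBasis_range_cyl.exists_subset_of_mem_open hξ hU
  exact ⟨w, hw⟩

theorem isOpenMap_wcat (w : List X) : IsOpenMap (wcat w) := by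
  refine isTopologicalBasis_range_cyl.isOpenMap_iff.mpr ?_
  rintro _ ⟨v, rfl⟩
  rw [image_wcat_cyl]
  exact isOpen_cyl _

theorem isNowhereDense_preimage_wcat {A : Set (ℕ → X)} (hA : IsNowhereDense A) (w : List X) :
    IsNowhereDense (wcat w ⁻¹' A) :=
  isNowhereDense_preimage_of_isOpenMap (continuous_wcat w) (isOpenMap_wcat w) hA

theorem exists_disjoint_cyl_of_isNowhereDense {A : Set (ℕ → X)} (hA : IsNowhereDense A) :
    ∃ w, Disjoint (cyl w) A := by
  rcases isEmpty_or_nonempty (ℕ → X) with _ | _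
  · exact ⟨[], by rw [eq_empty_of_isEmpty A]; exact disjoint_empty _⟩
  · have hne : (closure A)ᶜ.Nonempty := (interior_eq_empty_iff_dense_compl.mp hA).nonempty
    obtain ⟨w, hw⟩ := exists_cyl_subset isClosed_closure.isOpen_compl hne
    exact ⟨w, (disjoint_left.mpr hw).mono_right subset_closure⟩

theorem isNowhereDense_of_forall_exists_disjoint_cyl {A : Set (ℕ → X)}
    (h : ∀ u, ∃ v, Disjoint (cyl (u ++ v)) A) : IsNowhereDense A := by
  by_contra hA
  have hne : (interior (closure A)).Nonempty := nonempty_iff_ne_empty.mpr hA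
  obtain ⟨u, hu⟩ := exists_cyl_subset isOpen_interior hne
  obtain ⟨v, hv⟩ := h u
  have hcyl : wcat (u ++ v) hne.some ∈ cyl (u ++ v) := wcat_mem_cyl _ _
  exact disjoint_left.mp (hv.closure_right (isOpen_cyl _)) hcyl
    (interior_subset (hu (cyl_anti (List.prefix_append u v) hcyl)))

end CantorTopology

section Substitution

variable {Y : Type}

theorem length_le_length_flatMap {σ : Y → List X} (hσ : ∀ y, σ y ≠ []) (l : List Y) :
    l.length ≤ (l.flatMap σ).length := by
  induction l with
  | nil => exact le_rfl
  | cons y l ih =>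
    rw [List.flatMap_cons, List.length_append, List.length_cons]
    have : 0 < (σ y).length := List.length_pos_of_ne_nil (hσ y)
    omega

theorem le_length_flatMap_initSeg {σ : Y → List X} (hσ : ∀ y, σ y ≠ []) (f : ℕ → Y) (n : ℕ) :
    n ≤ ((initSeg f n).flatMap σ).length :=
  (length_initSeg f n).ge.trans (length_le_length_flatMap hσ _)

/-- The extension of a non-erasing substitution `σ` to ω-words: the infinite concatenation
`σ (f 0)·σ (f 1)·⋯`. Its `n`-th letter is already found in the first `n + 1` factors. -/
def omegaMap (σ : Y → List X) (hσ : ∀ y, σ y ≠ []) (f : ℕ → Y) : ℕ → X := fun n =>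
  ((initSeg f (n + 1)).flatMap σ)[n]'(le_length_flatMap_initSeg hσ f (n + 1))

variable {σ : Y → List X} {hσ : ∀ y, σ y ≠ []}

theorem omegaMap_mem_cyl (f : ℕ → Y) (k : ℕ) :
    omegaMap σ hσ f ∈ cyl ((initSeg f k).flatMap σ) := by
  rw [mem_cyl_iff_initSeg_eq]
  refine List.ext_getElem (length_initSeg _ _) fun n _ hn => ?_
  rw [getElem_initSeg, omegaMap]
  obtain h | h := le_total (n + 1) k
  · exact ((initSeg_prefix f h).flatMap σ).getElem _
  · exact (((initSeg_prefix f h).flatMap σ).getElem hn).symm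

theorem eq_omegaMap {f : ℕ → Y} {ξ : ℕ → X} (h : ∀ k, ξ ∈ cyl ((initSeg f k).flatMap σ)) :
    ξ = omegaMap σ hσ f :=
  eq_of_forall_mem_cyl (le_length_flatMap_initSeg hσ f) h (omegaMap_mem_cyl f)

theorem omegaMap_wcat (l : List Y) (f : ℕ → Y) :
    omegaMap σ hσ (wcat l f) = wcat (l.flatMap σ) (omegaMap σ hσ f) := by
  refine (eq_omegaMap fun k => cyl_anti ?_ (wcat_mem_cyl_append.mpr (omegaMap_mem_cyl f k))).symm
  rw [← List.flatMap_append, ← initSeg_wcat]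
  exact (initSeg_prefix _ (Nat.le_add_left _ _)).flatMap σ

theorem continuous_omegaMap [TopologicalSpace X] [DiscreteTopology X] [TopologicalSpace Y]
    [DiscreteTopology Y] : Continuous (omegaMap σ hσ) := by
  refine isTopologicalBasis_range_cyl.continuous_iff.mpr ?_
  rintro _ ⟨w, rfl⟩
  refine isOpen_iff_forall_mem_open.mpr fun f hf =>
    ⟨cyl (initSeg f w.length), fun g hg => ?_, isOpen_cyl _, mem_cyl_initSeg f _⟩
  have hinit : initSeg g w.length = initSeg f w.length := by
    simpa only [length_initSeg] using mem_cyl_iff_initSeg_eq.mp hg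
  have hprefix : w <+: (initSeg f w.length).flatMap σ :=
    prefix_of_mem_cyl hf (omegaMap_mem_cyl f _) (le_length_flatMap_initSeg hσ f _)
  exact cyl_anti hprefix (hinit ▸ omegaMap_mem_cyl g w.length)

end Substitution

section OmegaPowers

variable {V : Language X}

theorem omegaPow_eq_range (V : Language X) :
    omegaPow V =
      range (omegaMap (Subtype.val : {v // v ∈ V ∧ v ≠ []} → List X) fun v => v.2.2) := by
  have hval (f : ℕ → {v // v ∈ V ∧ v ≠ []}) (k : ℕ) :
      (initSeg f k).flatMap Subtype.val = ((List.range k).map fun i => (f i : List X)).flatten := by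
    rw [initSeg, List.flatMap_map, List.flatMap_def]
  ext ξ
  constructor
  · rintro ⟨f, hf, hξ⟩
    exact ⟨fun i => ⟨f i, hf i⟩, (eq_omegaMap fun k => hval _ k ▸ hξ k).symm⟩
  · rintro ⟨f, rfl⟩
    exact ⟨fun i => f i, fun i => (f i).2, fun k => hval f k ▸ omegaMap_mem_cyl f k⟩

theorem wcat_mem_omegaPow {w : List X} (hw : w ∈ V∗) {ξ : ℕ → X} (hξ : ξ ∈ omegaPow V) :
    wcat w ξ ∈ omegaPow V := by
  obtain ⟨l, rfl, hl⟩ := Language.mem_kstar_iff_exists_nonempty.mp hw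
  lift l to List {v // v ∈ V ∧ v ≠ []} using hl
  rw [omegaPow_eq_range] at hξ ⊢
  obtain ⟨f, rfl⟩ := hξ
  exact ⟨wcat l f, by rw [omegaMap_wcat, List.flatMap_def]⟩

theorem exists_eq_wcat_of_mem_omegaPow {ξ : ℕ → X} (hξ : ξ ∈ omegaPow V) (n : ℕ) :
    ∃ w ∈ V∗, n ≤ w.length ∧ ∃ η ∈ omegaPow V, ξ = wcat w η := by
  rw [omegaPow_eq_range] at hξ ⊢
  obtain ⟨f, rfl⟩ := hξ
  refine ⟨(initSeg f n).flatMap Subtype.val, ?_, ?_, _, mem_range_self fun i => f (n + i), ?_⟩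
  · rw [List.flatMap_def]
    exact Language.join_mem_kstar (List.forall_mem_map.mpr fun v _ => v.2.1)
  · exact le_length_flatMap_initSeg (fun v => v.2.2) f n
  · rw [← omegaMap_wcat, wcat_initSeg]

theorem preimage_wcat_omegaPow (V : Language X) (p : List X) :
    wcat p ⁻¹' omegaPow V = catOmega ((V∗).leftQuotient p) (omegaPow V) := by
  ext ξ
  constructor
  · intro hξ
    obtain ⟨w, hw, hlen, η, hη, h⟩ := exists_eq_wcat_of_mem_omegaPow hξ p.length
    obtain ⟨q, rfl⟩ := prefix_of_mem_cyl (wcat_mem_cyl p ξ) (h ▸ wcat_mem_cyl w η) hlen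
    exact ⟨q, hw, η, hη, wcat_injective p (by rw [h, wcat_append])⟩
  · rintro ⟨q, hq, η, hη, rfl⟩
    rw [mem_preimage, ← wcat_append]
    exact wcat_mem_omegaPow hq hη

theorem finite_range_preimage_wcat_omegaPow (hV : V.IsRegular) :
    (range fun p => wcat p ⁻¹' omegaPow V).Finite := by
  simp only [preimage_wcat_omegaPow]
  rw [range_comp' (catOmega · (omegaPow V))]
  exact (isRegular_kstar hV).finite_range_leftQuotient.image _

theorem isNowhereDense_omegaPow_of_isMeagre [TopologicalSpace X] [DiscreteTopology X]
    (hV : IsMeagre (omegaPow V)) : IsNowhereDense (omegaPow V) := by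
  rw [omegaPow_eq_range] at hV ⊢
  rcases isEmpty_or_nonempty (ℕ → {v // v ∈ V ∧ v ≠ []}) with _ | _
  · rw [range_eq_empty]
    exact isNowhereDense_empty
  let : TopologicalSpace {v // v ∈ V ∧ v ≠ []} := ⊥
  have : DiscreteTopology {v // v ∈ V ∧ v ≠ []} := ⟨rfl⟩
  obtain ⟨U, hUo, hUne, hU⟩ :=
    exists_isOpen_isNowhereDense_image_of_isMeagre_range continuous_omegaMap hV
  obtain ⟨l, hl⟩ := exists_cyl_subset hUo hUne
  refine (isNowhereDense_preimage_wcat hU (l.flatMap Subtype.val)).mono ?_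
  rintro _ ⟨f, rfl⟩
  exact ⟨wcat l f, hl (wcat_mem_cyl l f), omegaMap_wcat l f⟩

end OmegaPowers

section Infixes

theorem exists_disjoint_infixOcc [TopologicalSpace X] [DiscreteTopology X] {A : Set (ℕ → X)}
    (hfin : (range fun p => wcat p ⁻¹' A).Finite) (hA : IsNowhereDense A) :
    ∃ z, Disjoint A (infixOcc z) := by
  have hN : IsNowhereDense (⋃₀ range fun p => wcat p ⁻¹' A) :=
    isNowhereDense_sUnion hfin (forall_mem_range.mpr (isNowhereDense_preimage_wcat hA))
  obtain ⟨z, hz⟩ := exists_disjoint_cyl_of_isNowhereDense hN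
  refine ⟨z, disjoint_left.mpr fun ξ hξ => ?_⟩
  rintro ⟨p, η, rfl⟩
  rw [wcat_append] at hξ
  exact disjoint_left.mp hz (wcat_mem_cyl z η) (mem_sUnion_of_mem hξ (mem_range_self p))

theorem disjunctive_of_wcat {w : List X} {ξ : ℕ → X} (h : Disjunctive (wcat w ξ)) :
    Disjunctive ξ := by
  intro v
  obtain ⟨u, hu⟩ := h (w ++ v)
  rw [← List.append_assoc] at hu
  obtain ⟨p, hp⟩ : w <+: u ++ w :=
    prefix_of_mem_cyl (wcat_mem_cyl w ξ) (cyl_anti (List.prefix_append _ _) hu) (by simp)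
  rw [← hp, List.append_assoc] at hu
  exact ⟨p, wcat_mem_cyl_append.mp hu⟩

theorem not_disjunctive_of_isMeagre [TopologicalSpace X] [DiscreteTopology X] {F : Set (ℕ → X)}
    (hF : IsRegOmega F) (hm : IsMeagre F) {ξ : ℕ → X} (hξ : ξ ∈ F) : ¬ Disjunctive ξ := by
  obtain ⟨n, W, V, hreg, rfl⟩ := hF
  obtain ⟨i, hi⟩ := mem_iUnion.mp hξ
  obtain ⟨w, hw, η, hη, rfl⟩ := hi
  have hsub : omegaPow (V i) ⊆ wcat w ⁻¹' ⋃ i, catOmega (W i) (omegaPow (V i)) :=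
    fun ζ hζ => mem_iUnion_of_mem (s := fun i => catOmega (W i) (omegaPow (V i))) i
      ⟨w, hw, ζ, hζ, rfl⟩
  have hVm : IsMeagre (omegaPow (V i)) :=
    (hm.preimage_of_isOpenMap (continuous_wcat w) (isOpenMap_wcat w)).mono hsub
  obtain ⟨z, hz⟩ := exists_disjoint_infixOcc
    (finite_range_preimage_wcat_omegaPow (hreg i).2.isRegular)
    (isNowhereDense_omegaPow_of_isMeagre hVm)
  exact fun hdis => disjoint_left.mp hz hη (disjunctive_of_wcat hdis z)

end Infixes

section Blocks

variable {V : Language X} {w : List X}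

theorem flatten_initSeg_blocks (ξ : ℕ → X) (n k : ℕ) :
    (initSeg (fun i => initSeg (fun j => ξ (n * i + j)) n) k).flatten = initSeg ξ (n * k) := by
  induction k with
  | zero => rfl
  | succ k ih =>
    rw [initSeg_add, List.flatten_append, ih, Nat.mul_succ, initSeg_add]
    exact congrArg _ List.flatten_singleton

theorem mem_omegaPow_of_blocks_mem {ξ : ℕ → X} {n : ℕ} (hn : n ≠ 0)
    (h : ∀ i, initSeg (fun j => ξ (n * i + j)) n ∈ V) : ξ ∈ omegaPow V :=
  ⟨_, fun i => ⟨h i, List.ne_nil_of_length_pos (by rw [length_initSeg]; omega)⟩,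
    fun k => flatten_initSeg_blocks ξ n k ▸ mem_cyl_initSeg ξ (n * k)⟩

theorem disjoint_cyl_omegaPow (hV : ∀ v ∈ V, v.length = w.length) (hw : w ∉ V) {t : List X}
    (ht : w.length ∣ t.length) : Disjoint (cyl (t ++ w)) (omegaPow V) := by
  rw [disjoint_left]
  rintro ξ hξ ⟨f, hf, hmem⟩
  obtain ⟨k, hk⟩ := ht
  have hlen (m : ℕ) : (initSeg f m).flatten.length = w.length * m := by
    simp [initSeg, List.length_flatten, Function.comp_def, hV _ (hf _).1, mul_comm]
  have hsucc : (initSeg f (k + 1)).flatten = (initSeg f k).flatten ++ f k := by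
    simp [initSeg, List.range_succ]
  have hlen_eq : (t ++ w).length = (initSeg f (k + 1)).flatten.length := by
    rw [hlen, List.length_append, hk, Nat.mul_succ]
  have heq : t ++ w = (initSeg f k).flatten ++ f k :=
    (eq_of_mem_cyl hξ (hmem (k + 1)) hlen_eq).trans hsucc
  have hfk : w = f k := List.append_inj_right heq (hk.trans (hlen k).symm)
  exact hw (hfk ▸ (hf k).1)

-- Every `u` extends to `u^n·w` with `n = |w|`, whose forbidden block starts at a multiple of `n`.
theorem isNowhereDense_omegaPow_of_notMem [TopologicalSpace X] [DiscreteTopology X] (hne : w ≠ [])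
    (hV : ∀ v ∈ V, v.length = w.length) (hw : w ∉ V) : IsNowhereDense (omegaPow V) := by
  refine isNowhereDense_of_forall_exists_disjoint_cyl fun u =>
    ⟨(List.replicate (w.length - 1) u).flatten ++ w, ?_⟩
  have hpow : u ++ (List.replicate (w.length - 1) u).flatten =
      (List.replicate w.length u).flatten := by
    rw [← List.flatten_cons, ← List.replicate_succ,
      Nat.sub_add_cancel (List.length_pos_of_ne_nil hne)]
  rw [← List.append_assoc, hpow]
  exact disjoint_cyl_omegaPow hV hw ⟨u.length, by simp⟩

theorem isRegOmega_omegaPow (hV : IsRegLang V) : IsRegOmega (omegaPow V) := by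
  have hone : IsRegLang (1 : Language X) := .finite _ (finite_singleton _)
  refine ⟨1, fun _ => 1, fun _ => V, fun _ => ⟨hone, hV⟩, ?_⟩
  rw [iUnion_const]
  ext ξ
  constructor
  · exact fun hξ => ⟨[], Language.nil_mem_one, ξ, hξ, rfl⟩
  · rintro ⟨_, rfl, η, hη, rfl⟩
    exact hη

theorem exists_isRegOmega_isMeagre_of_not_disjunctive [Finite X] [TopologicalSpace X]
    [DiscreteTopology X] {ξ : ℕ → X} (h : ¬ Disjunctive ξ) :
    ∃ F, IsRegOmega F ∧ IsMeagre F ∧ ξ ∈ F := by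
  obtain ⟨w, hw⟩ := not_forall.mp h
  have hshift (m : ℕ) : (fun j => ξ (m + j)) ∉ cyl w := fun hm =>
    hw ⟨initSeg ξ m, by
      simpa only [wcat_initSeg] using (wcat_mem_cyl_append (w := initSeg ξ m)).mpr hm⟩
  have hne : w ≠ [] := fun h_nil => hshift 0 (h_nil ▸ wcat_mem_cyl [] _)
  let V : Language X := {v | v.length = w.length ∧ v ≠ w}
  have hVfin : (V : Set (List X)).Finite :=
    (List.finite_length_eq X w.length).subset fun v hv => hv.1
  have hblocks (i : ℕ) : initSeg (fun j => ξ (w.length * i + j)) w.length ∈ V :=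
    ⟨length_initSeg _ _, fun hi => hshift _ (mem_cyl_iff_initSeg_eq.mpr hi)⟩
  exact ⟨omegaPow V, isRegOmega_omegaPow (.finite V hVfin),
    (isNowhereDense_omegaPow_of_notMem hne (fun v hv => hv.1) fun hmem => hmem.2 rfl).isMeagre,
    mem_omegaPow_of_blocks_mem (mt List.length_eq_zero_iff.mp hne) hblocks⟩

end Blocks

theorem stmt8 {X : Type} [Fintype X] (hX : 2 ≤ Fintype.card X) :
    (∀ ξ : ℕ → X,
      (∃ F : Set (ℕ → X), IsRegOmega F ∧ @IsMeagre _ (cantorTop X) F ∧ ξ ∈ F)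
        ↔ ¬ Disjunctive ξ) ∧
    ⋃₀ {F : Set (ℕ → X) | IsRegOmega F ∧ @IsMeagre _ (cantorTop X) F}
      = ⋃ w : List X, (infixOcc w)ᶜ := by
  let : TopologicalSpace X := ⊥
  have : DiscreteTopology X := ⟨rfl⟩
  have key (ξ : ℕ → X) :
      (∃ F : Set (ℕ → X), IsRegOmega F ∧ IsMeagre F ∧ ξ ∈ F) ↔ ¬ Disjunctive ξ :=
    ⟨fun ⟨_, hF, hm, hξ⟩ => not_disjunctive_of_isMeagre hF hm hξ,
      exists_isRegOmega_isMeagre_of_not_disjunctive⟩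
  refine ⟨key, ?_⟩
  ext ξ
  rw [mem_iUnion, mem_sUnion]
  simp only [mem_compl_iff, ← not_forall]
  refine Iff.trans ?_ (key ξ)
  exact exists_congr fun F => and_assoc

end AutoBaire
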